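/- Let (E,d) be a metric space, δ ∈ (0,1), p ∈ (1,∞) with α := δ - 1/p > 0, and q := 1/δ. If f ∈ \hat N^{δ,p}([0,T];E), then there is a constant C = C(δ,p) such that ‖f‖_{q-var;[s,t]} ≤ C · ‖f‖_{\hat N^{δ,p};[s,t]} · (t-s)^{α} for every [s,t] ⊆ [0,T]. In particular \hat N^{δ,p}([0,T];E) ⊆ C^{q-var}([0,T];E) and \hat N^{δ,p}([0,T];E) ⊆ C^{α-Höl}([0,T];E). -/

import Mathlib

/-!
The heart of the matter is the Hölder-type estimate
`d(f u, f v) ≤ C ‖f‖_{N^{δ,p};[u,v]} (v - u)^α` on one interval (`edist_le_nikNorm`). To get it, put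
`M h = (h⁻¹ ∫_u^{u+h} d(f u, f r)^p dr)^{1/p}`. Splitting `(u, u + 2h]` into two halves and shifting
the upper half by `h`, the triangle inequality and Minkowski's inequality give
`M (2h) ≤ M h + N h^α`, where `N` is the Nikolskii seminorm (`avgDist_double`). Iterating along
`h = L 2^{-k}`, summing the geometric series, and using `M h → 0` (continuity of `f` at `u`)
gives `M L ≤ C N L^α` (`avgDist_le`). Reflecting the interval gives the same bound for
the mean distance to `f v` (`nikNorm_reflect`), and `d(f u, f v)` is at most the sum of the two
means.

Raising the one-interval estimate to the power `q = 1/δ` and summing over a partition, the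
result follows from the discrete Hölder inequality with the conjugate exponents `p δ` and
`δ / α`, since the lengths of the intervals add up to `t - s`.
-/

open scoped ENNReal NNReal
open MeasureTheory

/-- `u 0, u 1, ..., u n` are the points of a partition of `[s,t]`. -/
def IsPart (s t : ℝ) (n : ℕ) (u : ℕ → ℝ) : Prop :=
  u 0 = s ∧ u n = t ∧ ∀ i < n, u i < u (i + 1)

/-- Riesz-type sum of `f` along a partition, with parameters `δ, p`. -/
noncomputable def rieszSum {E : Type*} [PseudoEMetricSpace E] (f : ℝ → E) (δ p : ℝ)
    (n : ℕ) (u : ℕ → ℝ) : ℝ≥0∞ :=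
  ∑ i ∈ Finset.range n,
    edist (f (u i)) (f (u (i + 1))) ^ p / ENNReal.ofReal (u (i + 1) - u i) ^ (δ * p - 1)

/-- Riesz type variation seminorm `‖f‖_{V^{δ,p};[s,t]}`. -/
noncomputable def VNorm {E : Type*} [PseudoEMetricSpace E] (f : ℝ → E) (δ p : ℝ)
    (s t : ℝ) : ℝ≥0∞ :=
  (⨆ n, ⨆ u, ⨆ _ : IsPart s t n u, rieszSum f δ p n u) ^ (1 / p)

/-- `q`-variation seminorm `‖f‖_{q-var;[s,t]}`. -/
noncomputable def qVar {E : Type*} [PseudoEMetricSpace E] (f : ℝ → E) (q : ℝ)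
    (s t : ℝ) : ℝ≥0∞ :=
  (⨆ n, ⨆ u, ⨆ _ : IsPart s t n u,
    ∑ i ∈ Finset.range n, edist (f (u i)) (f (u (i + 1))) ^ q) ^ (1 / q)

/-- `δ`-Hölder seminorm on `[s,t]`, i.e. `‖f‖_{V^{δ,∞};[s,t]}`. -/
noncomputable def holNorm {E : Type*} [PseudoEMetricSpace E] (f : ℝ → E) (δ : ℝ)
    (s t : ℝ) : ℝ≥0∞ :=
  ⨆ u, ⨆ v, ⨆ _ : s ≤ u ∧ u < v ∧ v ≤ t,
    edist (f u) (f v) / ENNReal.ofReal (v - u) ^ δ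

/-- Nikolskii seminorm `‖f‖_{N^{δ,p};[s,t]}`. -/
noncomputable def nikNorm {E : Type*} [PseudoEMetricSpace E] (f : ℝ → E) (δ p : ℝ)
    (s t : ℝ) : ℝ≥0∞ :=
  ⨆ h : ℝ, ⨆ _ : 0 < h ∧ h ≤ t - s,
    ENNReal.ofReal h ^ (-δ) *
      (∫⁻ r in Set.Ioc s (t - h), edist (f r) (f (r + h)) ^ p) ^ (1 / p)

/-- Refined Nikolskii seminorm `‖f‖_{\hat N^{δ,p};[s,t]}`. -/
noncomputable def nikHatNorm {E : Type*} [PseudoEMetricSpace E] (f : ℝ → E) (δ p : ℝ)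
    (s t : ℝ) : ℝ≥0∞ :=
  (⨆ n, ⨆ u, ⨆ _ : IsPart s t n u,
    ∑ i ∈ Finset.range n, nikNorm f δ p (u i) (u (i + 1)) ^ p) ^ (1 / p)

/-- Mixed Hölder-variation seminorm `‖f‖_{\tilde V^{δ,p};[s,t]}`. -/
noncomputable def tildeVNorm {E : Type*} [PseudoEMetricSpace E] (f : ℝ → E) (δ p : ℝ)
    (s t : ℝ) : ℝ≥0∞ :=
  (⨆ n, ⨆ u, ⨆ _ : IsPart s t n u,
    ∑ i ∈ Finset.range n,
      qVar f (1 / δ) (u i) (u (i + 1)) ^ p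
        / ENNReal.ofReal (u (i + 1) - u i) ^ (δ * p - 1)) ^ (1 / p)

/-- Fractional Sobolev (Sobolev–Slobodeckij) seminorm `‖f‖_{W^{δ,p};[s,t]}`. -/
noncomputable def sobNorm {E : Type*} [PseudoEMetricSpace E] (f : ℝ → E) (δ p : ℝ)
    (s t : ℝ) : ℝ≥0∞ :=
  (∫⁻ v in Set.Ioc s t, ∫⁻ u in Set.Ioc s t,
    edist (f u) (f v) ^ p / ENNReal.ofReal |v - u| ^ (1 + δ * p)) ^ (1 / p)

/-- The `L^p`-mean of the distance to `f u` over the interval `(u, u + h]`. The normalising factor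
is kept outside the power `1 / p`. -/
noncomputable def avgDist {E : Type*} [PseudoEMetricSpace E] (f : ℝ → E) (p u h : ℝ) : ℝ≥0∞ :=
  ENNReal.ofReal h ^ (-(1 / p)) *
    (∫⁻ r in Set.Ioc u (u + h), edist (f u) (f r) ^ p) ^ (1 / p)

theorem lintegral_shift_le_nikNorm {E : Type*} [PseudoEMetricSpace E] (f : ℝ → E) (δ p : ℝ)
    {u v h : ℝ} (hh : 0 < h) (hhv : h ≤ v - u) :
    (∫⁻ r in Set.Ioc u (v - h), edist (f r) (f (r + h)) ^ p) ^ (1 / p) ≤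
      nikNorm f δ p u v * ENNReal.ofReal h ^ δ := by
  have h1 : ENNReal.ofReal h ^ (-δ) *
      (∫⁻ r in Set.Ioc u (v - h), edist (f r) (f (r + h)) ^ p) ^ (1 / p) ≤ nikNorm f δ p u v :=
    le_iSup₂_of_le (f := fun (h : ℝ) (_ : 0 < h ∧ h ≤ v - u) => ENNReal.ofReal h ^ (-δ) *
      (∫⁻ r in Set.Ioc u (v - h), edist (f r) (f (r + h)) ^ p) ^ (1 / p)) h ⟨hh, hhv⟩ le_rfl
  have h0 : ENNReal.ofReal h ≠ 0 := by simpa using hh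
  have h2 : ENNReal.ofReal h ^ (-δ) * ENNReal.ofReal h ^ δ = 1 := by
    rw [← ENNReal.rpow_add _ _ h0 ENNReal.ofReal_ne_top]; simp
  calc _ = (ENNReal.ofReal h ^ (-δ) * ENNReal.ofReal h ^ δ) *
        (∫⁻ r in Set.Ioc u (v - h), edist (f r) (f (r + h)) ^ p) ^ (1 / p) := by rw [h2, one_mul]
    _ = (ENNReal.ofReal h ^ (-δ) *
        (∫⁻ r in Set.Ioc u (v - h), edist (f r) (f (r + h)) ^ p) ^ (1 / p)) *
          ENNReal.ofReal h ^ δ := by ring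
    _ ≤ _ := by gcongr

theorem setLIntegral_shift (g : ℝ → ℝ≥0∞) (a b h : ℝ) :
    ∫⁻ r in Set.Ioc (a + h) (b + h), g r = ∫⁻ r in Set.Ioc a b, g (r + h) := by
  have := (measurePreserving_add_right (volume : Measure ℝ) h).setLIntegral_comp_preimage_emb
    (measurableEmbedding_addRight h) g (Set.Ioc (a + h) (b + h))
  rw [← this]
  simp

theorem setLIntegral_reflect (g : ℝ → ℝ≥0∞) (a b : ℝ) :
    ∫⁻ r in Set.Ioc a b, g (a + b - r) = ∫⁻ r in Set.Ioc a b, g r := by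
  have := (Measure.measurePreserving_sub_left (volume : Measure ℝ) (a + b)).setLIntegral_comp_preimage_emb
    (Homeomorph.subLeft (a + b)).measurableEmbedding g (Set.Ioc a b)
  rw [← this, Set.preimage_const_sub_Ioc]
  simp only [add_sub_cancel_right, add_sub_cancel_left]
  exact setLIntegral_congr Ioc_ae_eq_Icc |>.trans (setLIntegral_congr Ico_ae_eq_Icc).symm

/-- The Nikolskii seminorm is invariant under the reflection of `[u,v]`. -/
theorem nikNorm_reflect {E : Type*} [PseudoEMetricSpace E] (f : ℝ → E) (δ p u v : ℝ) :
    nikNorm (fun r => f (u + v - r)) δ p u v = nikNorm f δ p u v := by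
  unfold nikNorm
  congr! 5 with h hh
  rw [← setLIntegral_reflect]
  refine lintegral_congr fun r => ?_
  rw [edist_comm]
  congr 3 <;> ring_nf

theorem aemeasurable_edist_of_continuousOn {E : Type*} [PseudoEMetricSpace E] {f g : ℝ → E} {a b : ℝ}
    (hf : ContinuousOn f (Set.Icc a b)) (hg : ContinuousOn g (Set.Icc a b)) :
    AEMeasurable (fun r => edist (f r) (g r)) (volume.restrict (Set.Ioc a b)) := by
  have h1 : ContinuousOn (fun r => edist (f r) (g r)) (Set.Icc a b) := by
    have : Continuous fun x : E × E => edist x.1 x.2 := continuous_edist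
    exact this.comp_continuousOn (hf.prodMk hg)
  exact (h1.mono Set.Ioc_subset_Icc_self).aemeasurable measurableSet_Ioc

/-- The dyadic step: passing from the mean over `(u, u + 2h]` to the mean over `(u, u + h]` costs
one increment of step `h` in `L^p`. -/
theorem avgDist_double {E : Type*} [PseudoEMetricSpace E] (f : ℝ → E) {δ p u v h : ℝ}
    (hp : 1 < p) (hf : ContinuousOn f (Set.Icc u v)) (hh : 0 < h) (hhv : u + 2 * h ≤ v) :
    avgDist f p u (2 * h) ≤
      avgDist f p u h + nikNorm f δ p u v * ENNReal.ofReal h ^ (δ - 1 / p) := by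
  have hp0 : 0 < p := by linarith
  have h0 : ENNReal.ofReal h ≠ 0 := by simpa using hh
  set φ : ℝ → ℝ≥0∞ := fun r => edist (f u) (f r) with hφ
  set g : ℝ → ℝ≥0∞ := fun r => edist (f r) (f (r + h)) with hg
  have hf1 : ContinuousOn f (Set.Icc u (u + h)) :=
    hf.mono (Set.Icc_subset_Icc le_rfl (by linarith))
  have hf2 : ContinuousOn (fun r => f (r + h)) (Set.Icc u (u + h)) :=
    hf.comp (by fun_prop) fun r hr => ⟨by linarith [hr.1], by linarith [hr.2]⟩
  have mφ : AEMeasurable φ (volume.restrict (Set.Ioc u (u + h))) :=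
    aemeasurable_edist_of_continuousOn continuousOn_const hf1
  have mg : AEMeasurable g (volume.restrict (Set.Ioc u (u + h))) :=
    aemeasurable_edist_of_continuousOn hf1 hf2
  have hsplit : ∫⁻ r in Set.Ioc u (u + 2 * h), φ r ^ p =
      (∫⁻ r in Set.Ioc u (u + h), φ r ^ p) + ∫⁻ r in Set.Ioc u (u + h), φ (r + h) ^ p := by
    rw [← setLIntegral_shift (fun r => φ r ^ p), ← Set.Ioc_union_Ioc_eq_Ioc
      (a := u) (b := u + h) (c := u + 2 * h) (by linarith) (by linarith),
      lintegral_union measurableSet_Ioc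
        (Set.Ioc_disjoint_Ioc_of_le le_rfl)]
    congr 4
    ring
  have hle : ∫⁻ r in Set.Ioc u (u + 2 * h), φ r ^ p ≤
      2 * ∫⁻ r in Set.Ioc u (u + h), (φ + g) r ^ p := by
    rw [hsplit, two_mul]
    refine add_le_add (lintegral_mono fun r => ?_) (lintegral_mono fun r => ?_)
    · exact ENNReal.rpow_le_rpow le_self_add hp0.le
    · exact ENNReal.rpow_le_rpow (edist_triangle _ _ _) hp0.le
  have hmink := ENNReal.lintegral_Lp_add_le mφ mg hp.le
  have hgle : (∫⁻ r in Set.Ioc u (u + h), g r ^ p) ^ (1 / p) ≤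
      nikNorm f δ p u v * ENNReal.ofReal h ^ δ := by
    refine le_trans ?_ (lintegral_shift_le_nikNorm f δ p hh (by linarith))
    gcongr
    linarith
  have hnorm : ENNReal.ofReal (2 * h) ^ (-(1 / p)) * 2 ^ (1 / p) =
      ENNReal.ofReal h ^ (-(1 / p)) := by
    rw [ENNReal.ofReal_mul zero_le_two, ENNReal.mul_rpow_of_ne_top (by simp) (by simp),
      mul_right_comm, ENNReal.ofReal_ofNat, ← ENNReal.rpow_add _ _ (by simp) (by simp)]
    simp
  calc avgDist f p u (2 * h)
      ≤ ENNReal.ofReal (2 * h) ^ (-(1 / p)) *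
        (2 * ∫⁻ r in Set.Ioc u (u + h), (φ + g) r ^ p) ^ (1 / p) := by
        unfold avgDist; gcongr
    _ = ENNReal.ofReal h ^ (-(1 / p)) *
        (∫⁻ r in Set.Ioc u (u + h), (φ + g) r ^ p) ^ (1 / p) := by
        rw [ENNReal.mul_rpow_of_nonneg _ _ (by positivity), ← mul_assoc, hnorm]
    _ ≤ ENNReal.ofReal h ^ (-(1 / p)) * ((∫⁻ r in Set.Ioc u (u + h), φ r ^ p) ^ (1 / p) +
          nikNorm f δ p u v * ENNReal.ofReal h ^ δ) := by
        gcongr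
        exact hmink.trans (by gcongr)
    _ = _ := by
        rw [mul_add, sub_eq_add_neg, ENNReal.rpow_add _ _ h0 ENNReal.ofReal_ne_top]
        unfold avgDist
        ring

/-- The normalisation of `avgDist`: the mean of a constant is that constant. -/
theorem avg_const (c : ℝ≥0∞) {p h : ℝ} (u : ℝ) (hp : 0 < p) (hh : 0 < h) :
    ENNReal.ofReal h ^ (-(1 / p)) * (∫⁻ _ in Set.Ioc u (u + h), c ^ p) ^ (1 / p) = c := by
  have h0 : ENNReal.ofReal h ≠ 0 := by simpa using hh
  rw [setLIntegral_const, Real.volume_Ioc, add_sub_cancel_left,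
    ENNReal.mul_rpow_of_nonneg _ _ (by positivity), ← ENNReal.rpow_mul,
    mul_one_div_cancel hp.ne', ENNReal.rpow_one, mul_left_comm,
    ← ENNReal.rpow_add _ _ h0 ENNReal.ofReal_ne_top]
  simp

theorem avgDist_le {E : Type*} [PseudoEMetricSpace E] (f : ℝ → E) {δ p u v : ℝ}
    (hp : 1 < p) (hα : 0 < δ - 1 / p) (hf : ContinuousOn f (Set.Icc u v)) (huv : u < v) :
    avgDist f p u (v - u) ≤
      (∑' k : ℕ, ((2⁻¹ : ℝ≥0∞) ^ (δ - 1 / p)) ^ k) *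
        (nikNorm f δ p u v * ENNReal.ofReal (v - u) ^ (δ - 1 / p)) := by
  have hp0 : 0 < p := by linarith
  have hL : 0 < v - u := sub_pos.2 huv
  set N := nikNorm f δ p u v
  set x : ℝ≥0∞ := (2⁻¹ : ℝ≥0∞) ^ (δ - 1 / p) with hx
  set l : ℕ → ℝ := fun n => (v - u) * (2⁻¹ : ℝ) ^ n with hl
  have lpos : ∀ n, 0 < l n := fun n => by positivity
  have lle : ∀ n, l n ≤ v - u := fun n =>
    mul_le_of_le_one_right hL.le (pow_le_one₀ (by norm_num) (by norm_num))
  have lα : ∀ n, ENNReal.ofReal (l n) ^ (δ - 1 / p) =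
      x ^ n * ENNReal.ofReal (v - u) ^ (δ - 1 / p) := fun n => by
    rw [hl, ENNReal.ofReal_mul hL.le, ENNReal.mul_rpow_of_nonneg _ _ hα.le, mul_comm,
      ENNReal.ofReal_pow (by norm_num), ENNReal.ofReal_inv_of_pos (by norm_num),
      ENNReal.ofReal_ofNat, hx, ← ENNReal.rpow_natCast, ← ENNReal.rpow_natCast,
      ← ENNReal.rpow_mul, ← ENNReal.rpow_mul, mul_comm (n : ℝ)]
  have key : ∀ n, avgDist f p u (v - u) ≤ avgDist f p u (l n) +
      (∑ k ∈ Finset.range n, x ^ (k + 1)) * (N * ENNReal.ofReal (v - u) ^ (δ - 1 / p)) := by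
    intro n
    induction n with
    | zero => simp [hl]
    | succ n ih =>
      have e : l n = 2 * l (n + 1) := by simp only [hl, pow_succ]; ring
      have hd := avgDist_double (δ := δ) f hp hf (lpos (n + 1))
        (by rw [← e]; linarith [lle n])
      rw [← e, lα] at hd
      refine ih.trans ((add_le_add_left hd _).trans (le_of_eq ?_))
      rw [Finset.sum_range_succ]
      ring
  have hsum : ∀ n, ∑ k ∈ Finset.range n, x ^ (k + 1) ≤ ∑' k : ℕ, x ^ k := fun n => by
    have h1 := ENNReal.sum_le_tsum (f := fun k : ℕ => x ^ k) (Finset.range (n + 1))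
    rw [Finset.sum_range_succ'] at h1
    exact le_self_add.trans h1
  refine ENNReal.le_of_forall_pos_le_add fun ε hε _ => ?_
  -- continuity of `f` at `u` makes the mean over a small interval smaller than `ε`
  have hcont : ∀ᶠ r in nhdsWithin u (Set.Icc u v), edist (f u) (f r) ≤ ε := by
    have := (hf u ⟨le_rfl, huv.le⟩).eventually
      (Metric.eball_mem_nhds (f u) (ENNReal.coe_pos.2 hε))
    filter_upwards [this] with r hr
    rw [edist_comm]
    exact (Metric.mem_eball.1 hr).le
  obtain ⟨η, hη, hηs⟩ := Metric.mem_nhdsWithin_iff.1 hcont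
  have ltend : Filter.Tendsto l Filter.atTop (nhds 0) := by
    have := (tendsto_pow_atTop_nhds_zero_of_lt_one (r := (2⁻¹ : ℝ)) (by norm_num)
      (by norm_num)).const_mul (v - u)
    simpa [hl] using this
  obtain ⟨n, hn⟩ := (ltend.eventually (gt_mem_nhds hη)).exists
  have hsmall : avgDist f p u (l n) ≤ ε := by
    rw [← avg_const (ε : ℝ≥0∞) u hp0 (lpos n)]
    unfold avgDist
    refine mul_le_mul_right (ENNReal.rpow_le_rpow (setLIntegral_mono' measurableSet_Ioc
      fun r hr => ENNReal.rpow_le_rpow ?_ hp0.le) (by positivity)) _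
    refine hηs ⟨?_, hr.1.le, by linarith [hr.2, lle n]⟩
    rw [Metric.mem_ball, Real.dist_eq, abs_lt]
    constructor <;> linarith [hr.1, hr.2]
  rw [add_comm]
  exact (key n).trans (add_le_add hsmall (mul_le_mul_left (hsum n) _))

/-- The Hölder-type estimate on a single interval. -/
theorem edist_le_nikNorm {E : Type*} [PseudoEMetricSpace E] (f : ℝ → E) {δ p u v : ℝ}
    (hp : 1 < p) (hα : 0 < δ - 1 / p) (hf : ContinuousOn f (Set.Icc u v)) (huv : u < v) :
    edist (f u) (f v) ≤
      (2 * ∑' k : ℕ, ((2⁻¹ : ℝ≥0∞) ^ (δ - 1 / p)) ^ k) *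
        (nikNorm f δ p u v * ENNReal.ofReal (v - u) ^ (δ - 1 / p)) := by
  have hp0 : 0 < p := by linarith
  set f' : ℝ → E := fun r => f (u + v - r) with hf'
  have hcf' : ContinuousOn f' (Set.Icc u v) :=
    hf.comp (by fun_prop) fun r hr => ⟨by linarith [hr.2], by linarith [hr.1]⟩
  have h1 := avgDist_le f hp hα hf huv
  have h2 := avgDist_le f' hp hα hcf' huv
  rw [nikNorm_reflect] at h2
  have e2 : avgDist f' p u (v - u) = ENNReal.ofReal (v - u) ^ (-(1 / p)) *
      (∫⁻ r in Set.Ioc u v, edist (f v) (f r) ^ p) ^ (1 / p) := by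
    rw [avgDist, ← setLIntegral_reflect (fun r => edist (f v) (f r) ^ p)]
    simp [hf']
  have m1 : AEMeasurable (fun r => edist (f u) (f r)) (volume.restrict (Set.Ioc u v)) :=
    aemeasurable_edist_of_continuousOn continuousOn_const hf
  have m2 : AEMeasurable (fun r => edist (f v) (f r)) (volume.restrict (Set.Ioc u v)) :=
    aemeasurable_edist_of_continuousOn continuousOn_const hf
  calc edist (f u) (f v)
      = ENNReal.ofReal (v - u) ^ (-(1 / p)) *
        (∫⁻ _ in Set.Ioc u (u + (v - u)), edist (f u) (f v) ^ p) ^ (1 / p) :=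
        (avg_const _ u hp0 (sub_pos.2 huv)).symm
    _ ≤ ENNReal.ofReal (v - u) ^ (-(1 / p)) *
        (∫⁻ r in Set.Ioc u v, ((fun r => edist (f u) (f r)) + fun r => edist (f v) (f r)) r ^ p)
          ^ (1 / p) := by
        rw [add_sub_cancel]
        gcongr with r
        exact edist_triangle_right _ _ _
    _ ≤ avgDist f p u (v - u) + avgDist f' p u (v - u) := by
        rw [e2, avgDist, add_sub_cancel, ← mul_add]
        gcongr
        exact ENNReal.lintegral_Lp_add_le m1 m2 hp.le
    _ ≤ _ := by
        rw [mul_assoc, two_mul]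
        exact add_le_add h1 h2

/-- `∑ N_i^q ℓ_i^{α q} ≤ (∑ N_i^p)^{q/p} (∑ ℓ_i)^{α q}` for `q = 1/δ` and `α = δ - 1/p`. -/
theorem sum_holder (δ p : ℝ) (hδ : 0 < δ) (hp : 1 < p) (hα : 0 < δ - 1 / p) (n : ℕ)
    (N l : ℕ → ℝ≥0∞) :
    ∑ i ∈ Finset.range n, (N i * l i ^ (δ - 1 / p)) ^ (1 / δ) ≤
      ((∑ i ∈ Finset.range n, N i ^ p) ^ (1 / p) *
        (∑ i ∈ Finset.range n, l i) ^ (δ - 1 / p)) ^ (1 / δ) := by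
  have hp0 : 0 < p := by linarith
  have hconj : (p * δ).HolderConjugate (δ / (δ - 1 / p)) := by
    refine Real.holderConjugate_iff.2 ⟨?_, ?_⟩
    · have : 1 / p < δ := by linarith
      rwa [div_lt_iff₀ hp0, mul_comm] at this
    · rw [inv_div]
      field_simp
      ring
  have h := ENNReal.inner_le_Lp_mul_Lq (Finset.range n) (fun i => N i ^ (1 / δ))
    (fun i => (l i ^ (δ - 1 / p)) ^ (1 / δ)) hconj
  have e1 : 1 / δ * (p * δ) = p := by field_simp
  have e2 : (δ - 1 / p) * (1 / δ) * (δ / (δ - 1 / p)) = 1 := by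
    have := hα.ne'
    generalize δ - 1 / p = a at *
    field_simp
  have e3 : 1 / (p * δ) = 1 / p * (1 / δ) := by field_simp
  have e4 : 1 / (δ / (δ - 1 / p)) = (δ - 1 / p) * (1 / δ) := by rw [one_div_div]; ring
  simp only [← ENNReal.rpow_mul, e1, e2, e3, e4, ENNReal.rpow_one] at h
  simpa only [ENNReal.mul_rpow_of_nonneg _ _ (one_div_pos.2 hδ).le, ← ENNReal.rpow_mul] using h

/-- refined Nikolskii regularity controls the `1/δ`-variation. -/
theorem qVar_le_nikHatNorm {E : Type*} [PseudoEMetricSpace E] (δ p : ℝ)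
    (hδ : 0 < δ) (hδ1 : δ < 1) (hp : 1 < p) (hα : 0 < δ - 1 / p) :
    ∃ C : ℝ, 0 < C ∧ ∀ (T : ℝ) (f : ℝ → E), 0 < T →
      ContinuousOn f (Set.Icc 0 T) → nikHatNorm f δ p 0 T ≠ ⊤ →
      ∀ s t, 0 ≤ s → s ≤ t → t ≤ T →
        qVar f (1 / δ) s t ≤
          ENNReal.ofReal C * nikHatNorm f δ p s t *
            ENNReal.ofReal (t - s) ^ (δ - 1 / p) := by
  set K : ℝ≥0∞ := 2 * ∑' k : ℕ, ((2⁻¹ : ℝ≥0∞) ^ (δ - 1 / p)) ^ k with hK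
  have hx : (2⁻¹ : ℝ≥0∞) ^ (δ - 1 / p) < 1 := ENNReal.rpow_lt_one (by simp) hα
  have hKtop : K ≠ ⊤ := by
    rw [hK, ENNReal.tsum_geometric]
    exact ENNReal.mul_ne_top (by simp) (ENNReal.inv_ne_top.2 (tsub_pos_of_lt hx).ne')
  have hKle : K ≤ ENNReal.ofReal (K.toReal + 1) :=
    (ENNReal.ofReal_toReal hKtop).symm.le.trans (ENNReal.ofReal_le_ofReal (by linarith))
  refine ⟨K.toReal + 1, by positivity, fun T f _ hf _ s t hs _ htT => ?_⟩
  have hq : 0 ≤ 1 / δ := (one_div_pos.2 hδ).le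
  unfold qVar
  rw [one_div_one_div, ← ENNReal.le_rpow_inv_iff hδ, ← one_div]
  refine iSup_le fun n => iSup₂_le fun u hu => ?_
  obtain ⟨hu0, hun, hlt⟩ := hu
  have hmono : ∀ j ≤ n, ∀ i ≤ j, u i ≤ u j := by
    intro j
    induction j with
    | zero => intro _ i hi; rw [Nat.le_zero.1 hi]
    | succ j ih =>
      intro hj i hi
      rcases Nat.le_succ_iff.1 hi with h | h
      · exact (ih (by omega) i h).trans (hlt j (by omega)).le
      · rw [h]
  have hpiece : ∀ i ∈ Finset.range n, edist (f (u i)) (f (u (i + 1))) ^ (1 / δ) ≤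
      K ^ (1 / δ) * (nikNorm f δ p (u i) (u (i + 1)) *
        ENNReal.ofReal (u (i + 1) - u i) ^ (δ - 1 / p)) ^ (1 / δ) := fun i hi => by
    have hi := Finset.mem_range.1 hi
    rw [← ENNReal.mul_rpow_of_nonneg _ _ hq]
    refine ENNReal.rpow_le_rpow (edist_le_nikNorm f hp hα (hf.mono (Set.Icc_subset_Icc ?_ ?_))
      (hlt i hi)) hq
    · linarith [hmono i hi.le 0 (Nat.zero_le i)]
    · linarith [hmono n le_rfl (i + 1) hi]
  have hlen : ∑ i ∈ Finset.range n, ENNReal.ofReal (u (i + 1) - u i) =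
      ENNReal.ofReal (t - s) := by
    rw [← ENNReal.ofReal_sum_of_nonneg fun i hi =>
      sub_nonneg.2 (hlt i (Finset.mem_range.1 hi)).le, Finset.sum_range_sub, hu0, hun]
  have hhat : (∑ i ∈ Finset.range n, nikNorm f δ p (u i) (u (i + 1)) ^ p) ^ (1 / p) ≤
      nikHatNorm f δ p s t := by
    refine ENNReal.rpow_le_rpow ?_ (by positivity)
    exact le_iSup_of_le n (le_iSup₂_of_le (f := fun (u : ℕ → ℝ) (_ : IsPart s t n u) =>
      ∑ i ∈ Finset.range n, nikNorm f δ p (u i) (u (i + 1)) ^ p) u ⟨hu0, hun, hlt⟩ le_rfl)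
  refine (Finset.sum_le_sum hpiece).trans ?_
  rw [← Finset.mul_sum]
  refine (mul_le_mul_right (sum_holder δ p hδ hp hα n _ _) _).trans ?_
  rw [hlen, ← ENNReal.mul_rpow_of_nonneg _ _ hq, ← mul_assoc]
  gcongr
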